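/- If there exists a Σ-structure that satisfies φ₁ and that has no {Q,P}-extension satisfying φ₂, then the tiling system 𝔇 has a solution. -/

import Mathlib

/-! Core: relational two-variable first-order logic with equality (unary and
binary predicates only), the guarded fragment GF², structures, satisfaction,
atomic types, (bounded/delimited) guarded bisimulations, forest structures. -/

namespace GFC

inductive Var : Type
  | x
  | y
deriving DecidableEq

/-- Formulas of two-variable relational FO with equality (variables `x`, `y`). -/
inductive Fml (U B : Type) : Type
  | uatom : U → Var → Fml U B
  | batom : B → Var → Var → Fml U B
  | eqv   : Var → Var → Fml U B
  | fls   : Fml U B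
  | neg   : Fml U B → Fml U B
  | conj  : Fml U B → Fml U B → Fml U B
  | disj  : Fml U B → Fml U B → Fml U B
  | impl  : Fml U B → Fml U B → Fml U B
  | all   : Var → Fml U B → Fml U B
  | ex    : Var → Fml U B → Fml U B

namespace Fml

variable {U B : Type}

def free : Fml U B → Set Var
  | uatom _ v => {v}
  | batom _ v w => {v, w}
  | eqv v w => {v, w}
  | fls => ∅
  | neg φ => φ.free
  | conj φ ψ => φ.free ∪ ψ.free
  | disj φ ψ => φ.free ∪ ψ.free
  | impl φ ψ => φ.free ∪ ψ.free
  | all v φ => φ.free \ {v}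
  | ex v φ => φ.free \ {v}

def IsSentence (φ : Fml U B) : Prop := φ.free = ∅

def upreds : Fml U B → Set U
  | uatom P _ => {P}
  | batom _ _ _ => ∅
  | eqv _ _ => ∅
  | fls => ∅
  | neg φ => φ.upreds
  | conj φ ψ => φ.upreds ∪ ψ.upreds
  | disj φ ψ => φ.upreds ∪ ψ.upreds
  | impl φ ψ => φ.upreds ∪ ψ.upreds
  | all _ φ => φ.upreds
  | ex _ φ => φ.upreds

def bpreds : Fml U B → Set B
  | uatom _ _ => ∅
  | batom R _ _ => {R}
  | eqv _ _ => ∅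
  | fls => ∅
  | neg φ => φ.bpreds
  | conj φ ψ => φ.bpreds ∪ ψ.bpreds
  | disj φ ψ => φ.bpreds ∪ ψ.bpreds
  | impl φ ψ => φ.bpreds ∪ ψ.bpreds
  | all _ φ => φ.bpreds
  | ex _ φ => φ.bpreds

def IsAtom : Fml U B → Prop
  | uatom _ _ => True
  | batom _ _ _ => True
  | eqv _ _ => True
  | _ => False

def IsEqAtom : Fml U B → Prop
  | eqv _ _ => True
  | _ => False

/-- guarded quantifier depth (in GF² formulas every quantifier is guarded) -/
def gdepth : Fml U B → ℕ
  | uatom _ _ => 0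
  | batom _ _ _ => 0
  | eqv _ _ => 0
  | fls => 0
  | neg φ => φ.gdepth
  | conj φ ψ => max φ.gdepth ψ.gdepth
  | disj φ ψ => max φ.gdepth ψ.gdepth
  | impl φ ψ => max φ.gdepth ψ.gdepth
  | all _ φ => φ.gdepth + 1
  | ex _ φ => φ.gdepth + 1

/-- subformulas (including the formula itself) -/
def Subf : Fml U B → Set (Fml U B)
  | uatom P v => {uatom P v}
  | batom R v w => {batom R v w}
  | eqv v w => {eqv v w}
  | fls => {fls}
  | neg φ => insert (neg φ) φ.Subf
  | conj φ ψ => insert (conj φ ψ) (φ.Subf ∪ ψ.Subf)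
  | disj φ ψ => insert (disj φ ψ) (φ.Subf ∪ ψ.Subf)
  | impl φ ψ => insert (impl φ ψ) (φ.Subf ∪ ψ.Subf)
  | all v φ => insert (all v φ) φ.Subf
  | ex v φ => insert (ex v φ) φ.Subf

/-- rename the free variables along `f` (bound variables untouched) -/
def renameFree : (Var → Var) → Fml U B → Fml U B
  | f, uatom P v => uatom P (f v)
  | f, batom R v w => batom R (f v) (f w)
  | f, eqv v w => eqv (f v) (f w)
  | _, fls => fls
  | f, neg φ => neg (renameFree f φ)
  | f, conj φ ψ => conj (renameFree f φ) (renameFree f ψ)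
  | f, disj φ ψ => disj (renameFree f φ) (renameFree f ψ)
  | f, impl φ ψ => impl (renameFree f φ) (renameFree f ψ)
  | f, all v φ => all v (renameFree (Function.update f v v) φ)
  | f, ex v φ => ex v (renameFree (Function.update f v v) φ)

end Fml

/-- The two-variable guarded fragment GF²: quantification only in the guarded
patterns `∀v (α → φ)` and `∃v (α ∧ φ)` with `α` an atom containing all free
variables of `φ` as well as the quantified variable `v`. -/
inductive IsGF2 {U B : Type} : Fml U B → Prop
  | uatom (P : U) (v : Var) : IsGF2 (.uatom P v)
  | batom (R : B) (v w : Var) : IsGF2 (.batom R v w)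
  | eqv (v w : Var) : IsGF2 (.eqv v w)
  | fls : IsGF2 .fls
  | neg {φ} : IsGF2 φ → IsGF2 (.neg φ)
  | conj {φ ψ} : IsGF2 φ → IsGF2 ψ → IsGF2 (.conj φ ψ)
  | disj {φ ψ} : IsGF2 φ → IsGF2 ψ → IsGF2 (.disj φ ψ)
  | impl {φ ψ} : IsGF2 φ → IsGF2 ψ → IsGF2 (.impl φ ψ)
  | allG {v : Var} {α φ : Fml U B} :
      α.IsAtom → IsGF2 φ → φ.free ∪ {v} ⊆ α.free → IsGF2 (.all v (.impl α φ))
  | exG {v : Var} {α φ : Fml U B} :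
      α.IsAtom → IsGF2 φ → φ.free ∪ {v} ⊆ α.free → IsGF2 (.ex v (.conj α φ))

/-- openGF²: GF² formulas with exactly one free variable, in which equality is
never used as a guard and which contain no subformula that is a sentence. -/
def IsOpenGF2 {U B : Type} (φ : Fml U B) : Prop :=
  IsGF2 φ ∧ (∃ v, φ.free = {v}) ∧
  (∀ ψ ∈ φ.Subf, ¬ ψ.IsSentence) ∧
  (∀ ψ ∈ φ.Subf, ∀ (v : Var) (α χ : Fml U B),
      (ψ = .all v (.impl α χ) ∨ ψ = .ex v (.conj α χ)) → ¬ α.IsEqAtom)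

/-- relational structures interpreting unary predicates `U` and binary
predicates `B` -/
structure Str (U B : Type) where
  Dom : Type
  nonempty : Nonempty Dom
  u : U → Dom → Prop
  b : B → Dom → Dom → Prop

def upd {D : Type} (σ : Var → D) (v : Var) (d : D) : Var → D :=
  fun w => if w = v then d else σ w

def Sat {U B : Type} (A : Str U B) : Fml U B → (Var → A.Dom) → Prop
  | .uatom P v, σ => A.u P (σ v)
  | .batom R v w, σ => A.b R (σ v) (σ w)
  | .eqv v w, σ => σ v = σ w
  | .fls, _ => False
  | .neg φ, σ => ¬ Sat A φ σ
  | .conj φ ψ, σ => Sat A φ σ ∧ Sat A ψ σ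
  | .disj φ ψ, σ => Sat A φ σ ∨ Sat A ψ σ
  | .impl φ ψ, σ => Sat A φ σ → Sat A ψ σ
  | .all v φ, σ => ∀ d : A.Dom, Sat A φ (upd σ v d)
  | .ex v φ, σ => ∃ d : A.Dom, Sat A φ (upd σ v d)

/-- truth of a sentence in a structure -/
def SatS {U B : Type} (A : Str U B) (φ : Fml U B) : Prop := ∀ σ, Sat A φ σ

def Entails {U B : Type} (φ ψ : Fml U B) : Prop :=
  ∀ A : Str U B, SatS A φ → SatS A ψ

def Satisfiable {U B : Type} (φ : Fml U B) : Prop := ∃ A : Str U B, SatS A φ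

/-- a GF²(Σ)-sentence, for the signature Σ = (SU, SB) -/
def IsGF2Sentence {U B : Type} (SU : Set U) (SB : Set B) (ψ : Fml U B) : Prop :=
  IsGF2 ψ ∧ ψ.IsSentence ∧ ψ.upreds ⊆ SU ∧ ψ.bpreds ⊆ SB

/-- `φ₁ ⊨_Σ φ₂` : GF²(Σ)-entailment -/
def GF2Entails {U B : Type} (SU : Set U) (SB : Set B) (φ₁ φ₂ : Fml U B) : Prop :=
  ∀ ψ : Fml U B, IsGF2Sentence SU SB ψ → Entails φ₂ ψ → Entails φ₁ ψ

/-- atomic formulas in the variables x, y -/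
inductive Atom2 (U B : Type) : Type
  | ua : U → Var → Atom2 U B
  | ba : B → Var → Var → Atom2 U B

def vval {D : Type} (a a' : D) : Var → D
  | .x => a
  | .y => a'

def Atom2.inSig {U B : Type} (SU : Set U) (SB : Set B) : Atom2 U B → Prop
  | .ua P _ => P ∈ SU
  | .ba R _ _ => R ∈ SB

def Atom2.holds {U B : Type} (A : Str U B) (a a' : A.Dom) : Atom2 U B → Prop
  | .ua P v => A.u P (vval a a' v)
  | .ba R v w => A.b R (vval a a' v) (vval a a' w)

def Atom2.onlyX {U B : Type} : Atom2 U B → Prop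
  | .ua _ v => v = Var.x
  | .ba _ v w => v = Var.x ∧ w = Var.x

/-- the atomic 1-type of `a` for the signature `(SU, SB)` (the set of
Σ-atoms in the single variable x satisfied by `a`; this determines the set of
negated atoms as well) -/
def atp1 {U B : Type} (A : Str U B) (SU : Set U) (SB : Set B) (a : A.Dom) :
    Set (Atom2 U B) :=
  {α | α.onlyX ∧ α.inSig SU SB ∧ α.holds A a a}

/-- the atomic 2-type of `(a, a')` for the signature `(SU, SB)` (the set of
Σ-atoms in x, y satisfied by `(a, a')`; together with `a ≠ a'` this determines
the atomic 2-type) -/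
def atp2 {U B : Type} (A : Str U B) (SU : Set U) (SB : Set B) (a a' : A.Dom) :
    Set (Atom2 U B) :=
  {α | α.inSig SU SB ∧ α.holds A a a'}

/-- the atomic 2-type of `(a, a')` is guarded (contains `R x y` or `R y x`
for some binary `R ∈ SB`) -/
def Guarded2 {U B : Type} (A : Str U B) (SB : Set B) (a a' : A.Dom) : Prop :=
  ∃ R ∈ SB, A.b R a a' ∨ A.b R a' a

/-- GF²(Σ)-bisimulation between structures `A` and `Bm` -/
structure IsBisim {U B : Type} (A Bm : Str U B) (SU : Set U) (SB : Set B)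
    (Z : A.Dom → Bm.Dom → Prop) : Prop where
  atom_eq : ∀ {a b}, Z a b → atp1 A SU SB a = atp1 Bm SU SB b
  forth : ∀ {a b}, Z a b → ∀ a', a' ≠ a → Guarded2 A SB a a' →
      ∃ b', b' ≠ b ∧ atp2 A SU SB a a' = atp2 Bm SU SB b b' ∧ Z a' b'
  back : ∀ {a b}, Z a b → ∀ b', b' ≠ b → Guarded2 Bm SB b b' →
      ∃ a', a' ≠ a ∧ atp2 A SU SB a a' = atp2 Bm SU SB b b' ∧ Z a' b'

/-- `(A, a) ∼_Σ (Bm, b)` -/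
def Bisim {U B : Type} (A Bm : Str U B) (SU : Set U) (SB : Set B)
    (a : A.Dom) (b : Bm.Dom) : Prop :=
  ∃ Z, IsBisim A Bm SU SB Z ∧ Z a b

/-- `(A, a) ∼ᵏ_Σ (Bm, b)` : k-GF²(Σ)-bisimilarity -/
def KBisim {U B : Type} (A Bm : Str U B) (SU : Set U) (SB : Set B) :
    ℕ → A.Dom → Bm.Dom → Prop
  | 0, a, b => atp1 A SU SB a = atp1 Bm SU SB b
  | k+1, a, b => atp1 A SU SB a = atp1 Bm SU SB b ∧
      (∀ a', a' ≠ a → Guarded2 A SB a a' →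
        ∃ b', b' ≠ b ∧ atp2 A SU SB a a' = atp2 Bm SU SB b b' ∧
          KBisim A Bm SU SB k a' b') ∧
      (∀ b', b' ≠ b → Guarded2 Bm SB b b' →
        ∃ a', a' ≠ a ∧ atp2 A SU SB a a' = atp2 Bm SU SB b b' ∧
          KBisim A Bm SU SB k a' b')

/-- a (full-signature) atomic 2-type, given as its set of positive atoms,
is guarded -/
def Guarded2Type {U B : Type} (τ : Set (Atom2 U B)) : Prop :=
  ∃ R : B, Atom2.ba R Var.x Var.y ∈ τ ∨ Atom2.ba R Var.y Var.x ∈ τ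

/-- successor-saturated structures -/
def SuccSaturated {U B : Type} (A : Str U B) : Prop :=
  ∀ (a : A.Dom) (τ : Set (Atom2 U B)) (Γ : Set (Fml U B)),
    Guarded2Type τ →
    (∀ ψ ∈ Γ, IsOpenGF2 ψ ∧ ψ.free = {Var.x}) →
    (∀ Γ' : Finset (Fml U B), ↑Γ' ⊆ Γ →
      ∃ a', a' ≠ a ∧ atp2 A Set.univ Set.univ a a' = τ ∧
        ∀ ψ ∈ Γ', Sat A ψ (fun _ => a')) →
    ∃ b', b' ≠ a ∧ atp2 A Set.univ Set.univ a b' = τ ∧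
      ∀ ψ ∈ Γ, Sat A ψ (fun _ => b')

/-- finite outdegree: every element stands in a guarded atomic 2-type (for the
full signature) to only finitely many elements -/
def FiniteOutdeg {U B : Type} (A : Str U B) : Prop :=
  ∀ a : A.Dom, {a' | a' ≠ a ∧ ∃ R : B, A.b R a a' ∨ A.b R a' a}.Finite

/-- Σ-adjacency (edges of the Gaifman graph of the Σ-reduct) -/
def SigAdj {U B : Type} (A : Str U B) (SB : Set B) (a a' : A.Dom) : Prop :=
  a ≠ a' ∧ ∃ R ∈ SB, A.b R a a' ∨ A.b R a' a

/-- A forest structure: a structure whose Gaifman graph is a forest, directed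
by choosing a root for each tree; `parent p c` says that `p` is the
predecessor (parent) of `c`. -/
structure Forest (U B : Type) extends Str U B where
  parent : Dom → Dom → Prop
  parent_unique : ∀ {c p p' : Dom}, parent p c → parent p' c → p = p'
  parent_wf : WellFounded parent
  adj_iff : ∀ a a' : Dom,
    (a ≠ a' ∧ ∃ R : B, b R a a' ∨ b R a' a) ↔ (parent a a' ∨ parent a' a)

namespace Forest

variable {U B : Type}

/-- `a` together with its descendants -/
def desc (F : Forest U B) (a : F.Dom) : Set F.Dom :=
  {c | Relation.ReflTransGen F.parent a c}

/-- the subtrees rooted at `a` and at `a'` are isomorphic -/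
def SubtreeIso (F : Forest U B) (a a' : F.Dom) : Prop :=
  ∃ f : (F.desc a) ≃ (F.desc a'),
    (f ⟨a, Relation.ReflTransGen.refl⟩).val = a' ∧
    (∀ c d : F.desc a, F.parent c.val d.val ↔ F.parent (f c).val (f d).val) ∧
    (∀ (P : U) (c : F.desc a), F.u P c.val ↔ F.u P (f c).val) ∧
    (∀ (R : B) (c d : F.desc a), F.b R c.val d.val ↔ F.b R (f c).val (f d).val)

/-- regular: only finitely many subtrees up to isomorphism -/
def Regular (F : Forest U B) : Prop :=
  ∃ S : Set F.Dom, S.Finite ∧ ∀ a, ∃ a' ∈ S, F.SubtreeIso a' a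

/-- `a ≺ a'` : `a` and `a'` lie in the same Σ-tree and `a` is a proper
ancestor of `a'` -/
def prec (F : Forest U B) (SB : Set B) (a a' : F.Dom) : Prop :=
  Relation.ReflTransGen (SigAdj F.toStr SB) a a' ∧ Relation.TransGen F.parent a a'

end Forest

/-- `a_⊥`-delimited GF²(Σ)-bisimulation: like a GF²(Σ)-bisimulation except that
the back-and-forth conditions are not required at pairs whose first component
is `abot` -/
structure IsPtDelimBisim {U B : Type} (A Bm : Str U B) (SU : Set U) (SB : Set B)
    (abot : A.Dom) (Z : A.Dom → Bm.Dom → Prop) : Prop where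
  atom_eq : ∀ {a b}, Z a b → atp1 A SU SB a = atp1 Bm SU SB b
  forth : ∀ {a b}, Z a b → a ≠ abot → ∀ a', a' ≠ a → Guarded2 A SB a a' →
      ∃ b', b' ≠ b ∧ atp2 A SU SB a a' = atp2 Bm SU SB b b' ∧ Z a' b'
  back : ∀ {a b}, Z a b → a ≠ abot → ∀ b', b' ≠ b → Guarded2 Bm SB b b' →
      ∃ a', a' ≠ a ∧ atp2 A SU SB a a' = atp2 Bm SU SB b b' ∧ Z a' b'

/-- `(A, a) ∼^{a_⊥}_Σ (Bm, b)` -/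
def PtDelimBisim {U B : Type} (A Bm : Str U B) (SU : Set U) (SB : Set B)
    (abot : A.Dom) (a : A.Dom) (b : Bm.Dom) : Prop :=
  ∃ Z, IsPtDelimBisim A Bm SU SB abot Z ∧ Z a b

/-- `A_⊥`-delimited GF²(Σ)-bisimulation between a forest structure `F` and a
structure `Bm`, given by a pair of relations `Z0 (∼⁰)` and `Z1 (∼¹)`. -/
structure IsDelimBisim {U B : Type} (F : Forest U B) (Bm : Str U B)
    (SU : Set U) (SB : Set B) (Abot : Set F.Dom)
    (Z0 Z1 : F.Dom → Bm.Dom → Prop) : Prop where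
  zero : ∀ {a b}, Z0 a b →
    atp1 F.toStr SU SB a = atp1 Bm SU SB b ∧
    (∀ a', a' ≠ a → Guarded2 F.toStr SB a a' →
      ∃ b', b' ≠ b ∧
        ((F.parent a' a ∧ a' ∈ Abot) → Z1 a' b') ∧
        (¬ (F.parent a' a ∧ a' ∈ Abot) → Z0 a' b')) ∧
    (∀ b', b' ≠ b → Guarded2 Bm SB b b' →
      ∃ a', a' ≠ a ∧
        ((F.parent a' a ∧ a' ∈ Abot) → Z1 a' b') ∧
        (¬ (F.parent a' a ∧ a' ∈ Abot) → Z0 a' b'))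
  one : ∀ {a b}, Z1 a b → (∀ p, F.parent p a → p ∉ Abot) →
    atp1 F.toStr SU SB a = atp1 Bm SU SB b ∧
    (∀ a', a' ≠ a → Guarded2 F.toStr SB a a' →
      ∃ b', b' ≠ b ∧
        ((F.parent a a' ∧ a ∈ Abot) → Z0 a' b') ∧
        (¬ (F.parent a a' ∧ a ∈ Abot) → Z1 a' b')) ∧
    (∀ b', b' ≠ b → Guarded2 Bm SB b b' →
      ∃ a', a' ≠ a ∧
        ((F.parent a a' ∧ a ∈ Abot) → Z0 a' b') ∧
        (¬ (F.parent a a' ∧ a ∈ Abot) → Z1 a' b'))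

/-- `(F, a) ∼^{A_⊥}_Σ (Bm, b)` -/
def DelimBisim {U B : Type} (F : Forest U B) (Bm : Str U B)
    (SU : Set U) (SB : Set B) (Abot : Set F.Dom) (a : F.Dom) (b : Bm.Dom) : Prop :=
  ∃ Z0 Z1, IsDelimBisim F Bm SU SB Abot Z0 Z1 ∧ Z0 a b

/-- `cl φ` : the subformulas of `φ` closed under single negation and renaming
of free variables (among x, y) -/
def clSet {U B : Type} (φ : Fml U B) : Set (Fml U B) :=
  {χ | ∃ ψ ∈ φ.Subf, ∃ f : Var → Var,
      χ = ψ.renameFree f ∨ χ = .neg (ψ.renameFree f)}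

/-- a 1-type for `φ₂`: a set of formulas `ψ(x)` from `cl φ₂` such that
`φ₂ ∧ ∃x ⋀ t(x)` is satisfiable -/
def OneType {U B : Type} (φ₂ : Fml U B) (t : Set (Fml U B)) : Prop :=
  t ⊆ clSet φ₂ ∧ (∀ ψ ∈ t, ψ.free ⊆ {Var.x}) ∧
  ∃ (A : Str U B) (a : A.Dom), SatS A φ₂ ∧ ∀ ψ ∈ t, Sat A ψ (fun _ => a)

/-- `tp_Bm(b)` : the 1-type of `b` in `Bm` (w.r.t. `φ₂`) -/
def tpOf {U B : Type} (Bm : Str U B) (φ₂ : Fml U B) (b : Bm.Dom) :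
    Set (Fml U B) :=
  {ψ | ψ ∈ clSet φ₂ ∧ ψ.free ⊆ {Var.x} ∧ Sat Bm ψ (fun _ => b)}

end GFC

namespace GFC

/-- a tiling system `𝔇 = (𝔗, H, V, Right, Left, Top, Bottom)` -/
structure TS where
  Tile : Type
  deq : DecidableEq Tile
  fin : Fintype Tile
  H : Tile → Tile → Bool
  V : Tile → Tile → Bool
  Right : Tile → Bool
  Left : Tile → Bool
  Top : Tile → Bool
  Bottom : Tile → Bool

/-- a solution `(n, m, τ)` of the tiling system `D` -/
def TS.HasSolution (D : TS) : Prop :=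
  ∃ (n m : ℕ) (hn : 0 < n) (hm : 0 < m) (τ : Fin n → Fin m → D.Tile),
    (∀ (i : Fin n) (j : Fin m) (h : (i : ℕ) + 1 < n),
        D.H (τ i j) (τ ⟨(i : ℕ) + 1, h⟩ j) = true) ∧
    (∀ (i : Fin n) (j : Fin m) (h : (j : ℕ) + 1 < m),
        D.V (τ i j) (τ i ⟨(j : ℕ) + 1, h⟩) = true) ∧
    (∀ j : Fin m, D.Left (τ ⟨0, hn⟩ j) = true ∧
        D.Right (τ ⟨n - 1, by omega⟩ j) = true) ∧
    (∀ i : Fin n, D.Bottom (τ i ⟨0, hm⟩) = true ∧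
        D.Top (τ i ⟨m - 1, by omega⟩) = true)

/-- unary predicates: one per tile, `G`, `O`, the four border predicates, and
the fresh predicates `Q`, `P` of `φ₂` -/
inductive UP (T : Type) : Type
  | tile (t : T)
  | G
  | O
  | Bri  -- B→
  | Ble  -- B←
  | Bup  -- B↑
  | Bdo  -- B↓
  | Qp
  | Pp

/-- binary predicates `R_h`, `R_v`, `S_h`, `S_v` -/
inductive BP : Type
  | Rh
  | Rv
  | Sh
  | Sv

def disjL {U B : Type} : List (Fml U B) → Fml U B
  | [] => .fls
  | φ :: l => .disj φ (disjL l)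

def conjL {U B : Type} : List (Fml U B) → Fml U B
  | [] => .neg .fls
  | φ :: l => .conj φ (conjL l)

noncomputable def tiles (D : TS) : List D.Tile := (@Finset.univ D.Tile D.fin).toList

/-- conjunct (1) of `φ₁`: every grid position carries exactly one tile and the
matching conditions hold -/
noncomputable def phi1Tiles (D : TS) : Fml (UP D.Tile) BP :=
  letI := D.deq
  .conj
    (.all .x (.impl (.uatom .G .x)
      (disjL ((tiles D).map (fun T =>
        .conj (.uatom (.tile T) .x)
          (conjL (((tiles D).filter (fun T' => decide (T' ≠ T))).map
            (fun T' => .neg (.uatom (.tile T') .x)))))))))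
    (.all .x (.impl (.uatom .G .x)
      (conjL ((tiles D).map (fun T =>
        .impl (.uatom (.tile T) .x)
          (.conj
            (disjL (((tiles D).filter (fun T' => D.H T T')).map (fun T' =>
              .all .y (.impl (.batom .Rh .x .y) (.uatom (.tile T') .y)))))
            (disjL (((tiles D).filter (fun T' => D.V T T')).map (fun T' =>
              .all .y (.impl (.batom .Rv .x .y) (.uatom (.tile T') .y)))))))))))

/-- conjunct (2) of `φ₁`, for one direction `D` with border predicate `Bd`,
edge formula `E(x,y)` and transversal predicate `Fb` -/
def borderAx (Tl : Type) (Bd : UP Tl) (E : Fml (UP Tl) BP) (Fb : BP) :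
    Fml (UP Tl) BP :=
  .conj
    (.all .x (.impl (.conj (.uatom .G .x) (.uatom Bd .x))
      (.conj (.neg (.ex .y E))
        (.conj (.all .y (.impl (.batom Fb .x .y) (.uatom Bd .y)))
               (.all .y (.impl (.batom Fb .y .x) (.uatom Bd .y)))))))
    (.all .x (.impl (.conj (.uatom .G .x) (.neg (.uatom Bd .x))) (.ex .y E)))

/-- conjunct (5) of `φ₁` for one border predicate and the corresponding set of
admissible tiles -/
noncomputable def borderTiles (D : TS) (Bd : UP D.Tile) (S : D.Tile → Bool) :
    Fml (UP D.Tile) BP :=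
  .all .x (.impl (.uatom Bd .x)
    (disjL (((tiles D).filter S).map (fun T => .uatom (.tile T) .x))))

/-- the sentence `φ₁` of the FO² tiling reduction -/
noncomputable def phi1T (D : TS) : Fml (UP D.Tile) BP :=
  .conj (phi1Tiles D)
  (.conj (borderAx D.Tile .Bri (.batom .Rh .x .y) .Rv)
  (.conj (borderAx D.Tile .Ble (.batom .Rh .y .x) .Rv)
  (.conj (borderAx D.Tile .Bup (.batom .Rv .x .y) .Rh)
  (.conj (borderAx D.Tile .Bdo (.batom .Rv .y .x) .Rh)
  (.conj (.ex .x (.conj (.uatom .O .x)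
            (.conj (.uatom .Ble .x) (.uatom .Bdo .x))))
  (.conj (.all .x (.impl (.uatom .O .x) (.uatom .G .x)))
  (.conj (.all .x (.impl (.uatom .G .x)
            (.all .y (.impl (.batom .Rh .x .y) (.uatom .G .y)))))
  (.conj (.all .x (.impl (.uatom .G .x)
            (.all .y (.impl (.batom .Rv .x .y) (.uatom .G .y)))))
  (.conj (borderTiles D .Bri D.Right)
  (.conj (borderTiles D .Ble D.Left)
  (.conj (borderTiles D .Bup D.Top)
  (.conj (borderTiles D .Bdo D.Bottom)
  (.conj (.all .x (.all .y (.impl (.batom .Sh .x .y) (.batom .Sh .x .y))))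
         (.all .x (.all .y (.impl (.batom .Sv .x .y) (.batom .Sv .x .y)))))))))))))))))

/-- `φ_D(x)`, the grid-defect formula -/
def phiDT (Tl : Type) : Fml (UP Tl) BP :=
  .conj
    (.ex .y (.conj (.batom .Rh .x .y)
      (.all .x (.impl (.batom .Rv .y .x) (.uatom .Pp .x)))))
    (.ex .y (.conj (.batom .Rv .x .y)
      (.all .x (.impl (.batom .Rh .y .x) (.neg (.uatom .Pp .x))))))

/-- the sentence `φ₂` of the FO² tiling reduction -/
def phi2T (Tl : Type) : Fml (UP Tl) BP :=
  .conj
    (.ex .x (.conj (.uatom .O .x) (.uatom .Qp .x)))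
    (.all .x (.impl (.uatom .Qp .x)
      (.disj (.ex .y (.conj (.batom .Rh .x .y) (.uatom .Qp .y)))
        (.disj (.ex .y (.conj (.batom .Rv .x .y) (.uatom .Qp .y)))
          (phiDT Tl)))))

/-- the signature `Σ` of `φ₁` (everything except the fresh predicates Q, P) -/
def SigOne (Tl : Type) : Set (UP Tl) := {u | u ≠ UP.Qp ∧ u ≠ UP.Pp}

end GFC

namespace GFC

open Classical in
/-- replace the interpretations of the fresh unary predicates `Q` and `P`
(the {Q,P}-extensions of the Σ-reduct of `A` are exactly the structures
`override A q p`) -/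
noncomputable def overrideQP (D : TS) (A : Str (UP D.Tile) BP)
    (q p : A.Dom → Prop) : Str (UP D.Tile) BP where
  Dom := A.Dom
  nonempty := A.nonempty
  u := fun P a => if P = UP.Qp then q a else if P = UP.Pp then p a else A.u P a
  b := A.b


theorem sat_disjL {U B : Type} (A : Str U B) (l : List (Fml U B)) (σ : Var → A.Dom) :
    Sat A (disjL l) σ ↔ ∃ φ ∈ l, Sat A φ σ := by
  induction l with
  | nil => simp [disjL, Sat]
  | cons a l ih => simp [disjL, Sat, ih]

theorem sat_conjL {U B : Type} (A : Str U B) (l : List (Fml U B)) (σ : Var → A.Dom) :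
    Sat A (conjL l) σ ↔ ∀ φ ∈ l, Sat A φ σ := by
  induction l with
  | nil => simp [conjL, Sat]
  | cons a l ih => simp [conjL, Sat, ih]

theorem phi2_of (D : TS) (A : Str (UP D.Tile) BP) (q p : A.Dom → Prop)
    (h1 : ∃ x, A.u .O x ∧ q x)
    (h2 : ∀ x, q x → (∃ y, A.b .Rh x y ∧ q y) ∨ (∃ y, A.b .Rv x y ∧ q y) ∨
      ((∃ y, A.b .Rh x y ∧ ∀ z, A.b .Rv y z → p z) ∧
       (∃ y, A.b .Rv x y ∧ ∀ z, A.b .Rh y z → ¬ p z))) :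
    SatS (overrideQP D A q p) (phi2T D.Tile) := by
  intro σ
  simpa [phi2T, phiDT, Sat, upd, overrideQP] using And.intro h1 h2

theorem row_up {X : Type} (Rh Rv : X → X → Prop) (R : X → Prop)
    (hRh : ∀ x y, R x → Rh x y → R y) (hRv : ∀ x y, R x → Rv x y → R y)
    (conf : ∀ x y y', R x → Rh x y → Rv x y' → ∃ z, Rv y z ∧ Rh y' z)
    (n : ℕ) : ∀ (f : ℕ → X) (y : X), R (f 0) → (∀ i < n, Rh (f i) (f (i+1))) → Rv (f 0) y →
      ∃ g : ℕ → X, g 0 = y ∧ (∀ i ≤ n, Rv (f i) (g i)) ∧ (∀ i < n, Rh (g i) (g (i+1))) := by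
  induction n with
  | zero =>
    intro f y _ _ hy
    refine ⟨fun _ => y, rfl, ?_, ?_⟩
    · intro i hi
      obtain rfl : i = 0 := by omega
      exact hy
    · intro i hi; omega
  | succ n ih =>
    intro f y hf hr hy
    obtain ⟨z, hz1, hz2⟩ := conf _ _ _ hf (hr 0 (by omega)) hy
    obtain ⟨g, g0, g1, g2⟩ := ih (fun i => f (i+1)) z (hRh _ _ hf (hr 0 (by omega)))
      (fun i hi => hr (i+1) (by omega)) hz1
    refine ⟨fun i => Nat.casesOn i y g, rfl, ?_, ?_⟩
    · intro i hi
      cases i with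
      | zero => exact hy
      | succ i => exact g1 i (by omega)
    · intro i hi
      cases i with
      | zero => simpa [g0] using hz2
      | succ i => exact g2 i (by omega)

theorem grid_up {X : Type} (Rh Rv : X → X → Prop) (R Bup : X → Prop)
    (hRh : ∀ x y, R x → Rh x y → R y) (hRv : ∀ x y, R x → Rv x y → R y)
    (conf : ∀ x y y', R x → Rh x y → Rv x y' → ∃ z, Rv y z ∧ Rh y' z)
    (hup : ∀ x, R x → ¬ Bup x → ∃ y, Rv x y)
    (n : ℕ) (a : X) (ha : Acc (fun y x => Rh x y ∨ Rv x y) a) :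
    R a → ∀ (f : ℕ → X), f 0 = a → (∀ i < n, Rh (f i) (f (i+1))) →
      ∃ (m : ℕ) (F : ℕ → ℕ → X), F 0 = f ∧ (∀ j ≤ m, ∀ i < n, Rh (F j i) (F j (i+1))) ∧
        (∀ j < m, ∀ i ≤ n, Rv (F j i) (F (j+1) i)) ∧ Bup (F m 0) := by
  induction ha with
  | intro a _ ih =>
    intro hR f f0 hf
    by_cases hb : Bup a
    · refine ⟨0, fun _ => f, rfl, fun _ _ => hf, fun j hj => by omega, ?_⟩
      simpa [f0] using hb
    · obtain ⟨y, hy⟩ := hup a hR hb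
      subst f0
      obtain ⟨g, g0, g1, g2⟩ := row_up Rh Rv R hRh hRv conf n f y hR hf hy
      obtain ⟨m, F, F0, F1, F2, F3⟩ := ih y (Or.inr hy) (hRv _ _ hR hy) g g0 g2
      refine ⟨m+1, fun j => Nat.casesOn j f F, rfl, ?_, ?_, F3⟩
      · intro j hj
        cases j with
        | zero => exact hf
        | succ j => exact F1 j (by omega)
      · intro j hj
        cases j with
        | zero => simpa [F0] using g1
        | succ j => exact F2 j (by omega)

theorem row_ex {X : Type} (Rh Rv : X → X → Prop) (R Bri : X → Prop)
    (hRh : ∀ x y, R x → Rh x y → R y)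
    (hri : ∀ x, R x → ¬ Bri x → ∃ y, Rh x y)
    (a : X) (ha : Acc (fun y x => Rh x y ∨ Rv x y) a) :
    R a → ∃ (n : ℕ) (f : ℕ → X), f 0 = a ∧ (∀ i < n, Rh (f i) (f (i+1))) ∧ Bri (f n) := by
  induction ha with
  | intro a _ ih =>
    intro hR
    by_cases hb : Bri a
    · exact ⟨0, fun _ => a, rfl, fun j hj => by omega, hb⟩
    · obtain ⟨y, hy⟩ := hri a hR hb
      obtain ⟨n, f, f0, f1, f2⟩ := ih y (Or.inl hy) (hRh _ _ hR hy)
      refine ⟨n+1, fun j => Nat.casesOn j a f, rfl, ?_, f2⟩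
      intro j hj
      cases j with
      | zero => simpa [f0] using hy
      | succ j => exact f1 j (by omega)

theorem tiling_sem (D : TS) {X : Type} (Rh Rv : X → X → Prop) (t : D.Tile → X → Prop)
    (G O Bri Ble Bup Bdo : X → Prop) (o : X)
    (t1 : ∀ x, G x → ∃ T, t T x ∧ ∀ T', T' ≠ T → ¬ t T' x)
    (t2 : ∀ x, G x → ∀ T, t T x → (∃ T', D.H T T' = true ∧ ∀ y, Rh x y → t T' y) ∧
      (∃ T', D.V T T' = true ∧ ∀ y, Rv x y → t T' y))
    (ri1 : ∀ x y, G x → Bri x → Rv x y → Bri y) (ri2 : ∀ x, G x → ¬ Bri x → ∃ y, Rh x y)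
    (le1 : ∀ x y, G x → Ble x → Rv x y → Ble y)
    (up1 : ∀ x y, G x → Bup x → Rh x y → Bup y) (up2 : ∀ x, G x → ¬ Bup x → ∃ y, Rv x y)
    (do1 : ∀ x y, G x → Bdo x → Rh x y → Bdo y)
    (oO : O o) (ole : Ble o) (odo : Bdo o) (OG : ∀ x, O x → G x)
    (Gh : ∀ x, G x → ∀ y, Rh x y → G y) (Gv : ∀ x, G x → ∀ y, Rv x y → G y)
    (bri : ∀ x, Bri x → ∃ T, D.Right T = true ∧ t T x)
    (ble : ∀ x, Ble x → ∃ T, D.Left T = true ∧ t T x)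
    (bup : ∀ x, Bup x → ∃ T, D.Top T = true ∧ t T x)
    (bdo : ∀ x, Bdo x → ∃ T, D.Bottom T = true ∧ t T x)
    (hno : ∀ q p : X → Prop, (∃ x, O x ∧ q x) →
      ¬ (∀ x, q x → (∃ y, Rh x y ∧ q y) ∨ (∃ y, Rv x y ∧ q y) ∨
      ((∃ y, Rh x y ∧ ∀ z, Rv y z → p z) ∧
       (∃ y, Rv x y ∧ ∀ z, Rh y z → ¬ p z)))) : D.HasSolution := by
  classical
  have hacc : Acc (fun y x => Rh x y ∨ Rv x y) o := by
    by_contra hn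
    refine hno (fun x => ¬ Acc (fun y x => Rh x y ∨ Rv x y) x) (fun _ => True) ⟨o, oO, hn⟩ ?_
    intro x hx
    by_contra hc
    push Not at hc
    apply hx
    constructor
    rintro y (hy | hy)
    · by_contra h; exact h (hc.1 y hy)
    · by_contra h; exact h (hc.2.1 y hy)
  let E : X → X → Prop := fun x y => Rh x y ∨ Rv x y
  let R : X → Prop := fun x => Relation.ReflTransGen E o x
  have RG : ∀ x, R x → G x := by
    intro x hx
    induction hx with
    | refl => exact OG _ oO
    | tail _ h ih =>
      rcases h with h | h
      · exact Gh _ ih _ h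
      · exact Gv _ ih _ h
  have hRh : ∀ x y, R x → Rh x y → R y := fun x y hx h => Relation.ReflTransGen.tail hx (Or.inl h)
  have hRv : ∀ x y, R x → Rv x y → R y := fun x y hx h => Relation.ReflTransGen.tail hx (Or.inr h)
  have conf : ∀ x y y', R x → Rh x y → Rv x y' → ∃ z, Rv y z ∧ Rh y' z := by
    intro d y y' hd hy hy'
    by_contra hc
    push Not at hc
    refine hno (fun x => Relation.ReflTransGen E x d) (fun z => Rv y z) ⟨o, oO, hd⟩ ?_
    intro x hx
    rcases Relation.ReflTransGen.cases_head hx with rfl | ⟨c, hc1 | hc1, hc2⟩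
    · exact Or.inr (Or.inr ⟨⟨y, hy, fun z h => h⟩, ⟨y', hy', fun z h h' => hc z h' h⟩⟩)
    · exact Or.inl ⟨c, hc1, hc2⟩
    · exact Or.inr (Or.inl ⟨c, hc1, hc2⟩)
  have Ro : R o := Relation.ReflTransGen.refl
  obtain ⟨n, f, f0, f1, f2⟩ := row_ex Rh Rv R Bri hRh (fun x hx => ri2 x (RG x hx)) o hacc Ro
  obtain ⟨m, F, F0, F1, F2, F3⟩ := grid_up Rh Rv R Bup hRh hRv conf
    (fun x hx => up2 x (RG x hx)) n o hacc Ro f f0 f1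
  have hF : ∀ j ≤ m, ∀ i ≤ n, G (F j i) := by
    intro j
    induction j with
    | zero =>
      intro _ i
      induction i with
      | zero => intro _; rw [F0, f0]; exact OG _ oO
      | succ i ih => intro hi; exact Gh _ (ih (by omega)) _ (F1 0 (by omega) i (by omega))
    | succ j ih => intro hj i hi; exact Gv _ (ih (by omega) i hi) _ (F2 j (by omega) i hi)
  have hle : ∀ j ≤ m, Ble (F j 0) := by
    intro j
    induction j with
    | zero => intro _; rw [F0, f0]; exact ole
    | succ j ih => intro hj; exact le1 _ _ (hF j (by omega) 0 (by omega)) (ih (by omega)) (F2 j (by omega) 0 (by omega))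
  have hri : ∀ j ≤ m, Bri (F j n) := by
    intro j
    induction j with
    | zero => intro _; rw [F0]; exact f2
    | succ j ih => intro hj; exact ri1 _ _ (hF j (by omega) n le_rfl) (ih (by omega)) (F2 j (by omega) n le_rfl)
  have hdo : ∀ i ≤ n, Bdo (F 0 i) := by
    intro i
    induction i with
    | zero => intro _; rw [F0, f0]; exact odo
    | succ i ih => intro hi; exact do1 _ _ (hF 0 (by omega) i (by omega)) (ih (by omega)) (F1 0 (by omega) i (by omega))
  have hup : ∀ i ≤ n, Bup (F m i) := by
    intro i
    induction i with
    | zero => intro _; exact F3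
    | succ i ih => intro hi; exact up1 _ _ (hF m le_rfl i (by omega)) (ih (by omega)) (F1 m le_rfl i (by omega))
  have hτ : ∃ τ : X → D.Tile, ∀ x, G x → t (τ x) x ∧ ∀ T', t T' x → T' = τ x := by
    refine ⟨fun x => if h : G x then (t1 x h).choose else (t1 o (OG o oO)).choose, fun x hx => ?_⟩
    simp only [hx, dif_pos]
    refine ⟨(t1 x hx).choose_spec.1, fun T' hT' => ?_⟩
    by_contra hne
    exact (t1 x hx).choose_spec.2 T' hne hT'
  obtain ⟨τ, hτ⟩ := hτ
  refine ⟨n+1, m+1, by omega, by omega, fun i j => τ (F j i), ?_, ?_, ?_, ?_⟩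
  · intro i j hi
    obtain ⟨T', h1, h2⟩ := (t2 _ (hF j (by omega) i (by omega)) _ (hτ _ (hF j (by omega) i (by omega))).1).1
    have := (hτ _ (hF j (by omega) (i+1) (by omega))).2 T' (h2 _ (F1 j (by omega) i (by omega)))
    rw [this] at h1
    exact h1
  · intro i j hj
    obtain ⟨T', h1, h2⟩ := (t2 _ (hF j (by omega) i (by omega)) _ (hτ _ (hF j (by omega) i (by omega))).1).2
    have := (hτ _ (hF (j+1) (by omega) i (by omega))).2 T' (h2 _ (F2 j (by omega) i (by omega)))
    rw [this] at h1
    exact h1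
  · intro j
    constructor
    · obtain ⟨T, h1, h2⟩ := ble _ (hle j (by omega))
      rw [(hτ _ (hF j (by omega) 0 (by omega))).2 T h2] at h1
      exact h1
    · obtain ⟨T, h1, h2⟩ := bri _ (hri j (by omega))
      rw [(hτ _ (hF j (by omega) n (by omega))).2 T h2] at h1
      exact h1
  · intro i
    constructor
    · obtain ⟨T, h1, h2⟩ := bdo _ (hdo i (by omega))
      rw [(hτ _ (hF 0 (by omega) i (by omega))).2 T h2] at h1
      exact h1
    · obtain ⟨T, h1, h2⟩ := bup _ (hup i (by omega))
      rw [(hτ _ (hF m (by omega) i (by omega))).2 T h2] at h1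
      exact h1

theorem mem_tiles (D : TS) (T : D.Tile) : T ∈ tiles D := by
  simp [tiles]

/-- If some Σ-structure satisfies `φ₁` and has no
{Q,P}-extension satisfying `φ₂`, then the tiling system `𝔇` has a solution. -/
theorem no_extension_implies_tiling_solution
    (D : TS)
    (h : ∃ A : Str (UP D.Tile) BP, SatS A (phi1T D) ∧
      ∀ q p : A.Dom → Prop, ¬ SatS (overrideQP D A q p) (phi2T D.Tile)) :
    D.HasSolution := by
  obtain ⟨A, hA, hno⟩ := h
  obtain ⟨d0⟩ := A.nonempty
  have H := hA (fun _ => d0)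
  simp only [phi1T, phi1Tiles, borderAx, borderTiles, Sat, sat_disjL, sat_conjL, upd] at H
  obtain ⟨⟨a1, a2⟩, ⟨b1, b2⟩, ⟨c1, c2⟩, ⟨d1, d2⟩, ⟨e1, e2⟩, ⟨o, o1, o2, o3⟩, OG, Gh, Gv,
    r1, r2, r3, r4, _⟩ := H
  simp [mem_tiles, Sat, sat_disjL, sat_conjL, upd] at a1 a2 b1 b2 c1 c2 d1 d2 e1 e2 o1 o2 o3 OG Gh Gv r1 r2 r3 r4
  refine tiling_sem D (A.b .Rh) (A.b .Rv) (fun T => A.u (.tile T)) (A.u .G) (A.u .O) (A.u .Bri)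
    (A.u .Ble) (A.u .Bup) (A.u .Bdo) o ?_ ?_ ?_ ?_ ?_ ?_ ?_ ?_ o1 o2 o3 OG Gh Gv r1 r2 r3 r4 ?_
  · exact a1
  · exact a2
  · exact fun x y hx hb hr => (b1 x hx hb).2.1 y hr
  · exact b2
  · exact fun x y hx hb hr => (c1 x hx hb).2.1 y hr
  · exact fun x y hx hb hr => (d1 x hx hb).2.1 y hr
  · exact d2
  · exact fun x y hx hb hr => (e1 x hx hb).2.1 y hr
  · exact fun q p h1 h2 => hno q p (phi2_of D A q p h1 h2)

end GFC
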